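/- arXiv:1711.02770 — 5 statements merged into one kernel-verified Lean document; each statement's English description precedes it below -/
import Mathlib

section
/- Let ι be a type, let b and k be natural numbers with 2b ≤ k, let S : Finset ι with |S| = k, and let B : Finset ι with |B| ≤ b (the compromised nodes). Let M be a type, m : M (the genuine message), and let f be a function assigning to each subset H ⊆ S with |H| = k − 2b an element f(H) ∈ M, such that f(H) = m whenever H ∩ B = ∅. Then: (i) there exists a test-group T ⊆ S with |T| = k − b such that f(H) = f(H') for all H, H' ⊆ T with |H| = |H'| = k − 2b (a consistent test-group exists); and (ii) for every T ⊆ S with |T| = k − b, if f(H) = f(H') for all H, H' ⊆ T with |H| = |H'| = k − 2b, then f(H) = m for every such H ⊆ T (all estimates in a consistent test-group are correct). -/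
/-!
Removing the at most `b` compromised nodes from the `k` accessed ones leaves at least `k - b`
honest nodes, so some test-group is entirely honest; all its estimates are genuine, hence agree.
Conversely, any test-group contains at least `(k - b) - b = k - 2b` honest nodes, so one of its
estimates is genuine, and consistency forces all the others to equal it.
-/

/-- correctness of test-group decoding. `S` is the set of `k` accessed
nodes, `B` the (at most `b`) compromised nodes, `m` the genuine message and `f H`
the estimate computed from a `(k - 2b)`-subset `H` of accessed nodes; estimates from
compromised-free subsets are genuine. Then (i) a consistent test-group (a `(k - b)`-subset
of `S` all of whose estimates agree) exists, and (ii) every estimate from a consistent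
test-group equals the genuine message. -/
theorem test_group_decoding_correct
    {ι : Type*} [DecidableEq ι] {M : Type*}
    (b k : ℕ) (hbk : 2 * b ≤ k)
    (S : Finset ι) (hS : S.card = k)
    (B : Finset ι) (hB : B.card ≤ b)
    (m : M) (f : Finset ι → M)
    (hf : ∀ H : Finset ι, H ⊆ S → H.card = k - 2 * b → H ∩ B = ∅ → f H = m) :
    (∃ T : Finset ι, T ⊆ S ∧ T.card = k - b ∧
      ∀ H H' : Finset ι, H ⊆ T → H' ⊆ T →
        H.card = k - 2 * b → H'.card = k - 2 * b → f H = f H') ∧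
    (∀ T : Finset ι, T ⊆ S → T.card = k - b →
      (∀ H H' : Finset ι, H ⊆ T → H' ⊆ T →
        H.card = k - 2 * b → H'.card = k - 2 * b → f H = f H') →
      ∀ H : Finset ι, H ⊆ T → H.card = k - 2 * b → f H = m) := by
  have clean : ∀ H T : Finset ι, H ⊆ T \ B → T ⊆ S → H.card = k - 2 * b → f H = m := by
    intro H T hHT hTS hH
    refine hf H (hHT.trans (Finset.sdiff_subset.trans hTS)) hH ?_
    exact Finset.disjoint_iff_inter_eq_empty.mp (Finset.sdiff_disjoint.mono_left hHT)
  constructor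
  · -- At least `k - b` accessed nodes are honest; any `k - b` of them are consistent.
    obtain ⟨T, hT, hTc⟩ : ∃ T ⊆ S \ B, T.card = k - b := by
      apply Finset.exists_subset_card_eq
      have := Finset.le_card_sdiff B S
      omega
    refine ⟨T, hT.trans Finset.sdiff_subset, hTc, fun H H' hH hH' hc hc' => ?_⟩
    rw [clean H S (hH.trans hT) subset_rfl hc, clean H' S (hH'.trans hT) subset_rfl hc']
  · -- A test-group keeps at least `(k - b) - b` honest nodes, enough for one genuine estimate.
    intro T hTS hTc hcons H hH hHc
    obtain ⟨G, hG, hGc⟩ : ∃ G ⊆ T \ B, G.card = k - 2 * b := by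
      apply Finset.exists_subset_card_eq
      have := Finset.le_card_sdiff B T
      omega
    rw [hcons H G hH (hG.trans Finset.sdiff_subset) hHc hGc, clean G T hG hTS hGc]
end

section
/- With the merge-operator setup below, define the m×m matrix Λ over F by Λ(t,u) := (if t < ξ and u < ξ then A(t,u) else 0) + (if m−ξ ≤ t and m−ξ ≤ u then B(t−(m−ξ), u−(m−ξ)) else 0), for 0 ≤ t, u < m. Then for every nonzero e ∈ F: Φ_{m,ε}(e, χ^A(e), χ^B(e)) = e^{(i−1)ξ} · ( ψ_m(e) · Λ ), as an equality of row vectors in F^m (the right-hand side is the scalar e^{(i−1)ξ} times the row-vector–matrix product ψ_m(e)·Λ). -/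
/-!
Row `t` of `Λ` meets the block `A` when `t < ξ` and the block `B` when `m - ξ ≤ t`, so the sum over
`Fin m` defining `ψ_m(e) · Λ` splits into two sums over `Fin ξ` (`sum_dite_lt` and `sum_dite_ge`).
The factor `e^{(i-1)ξ}` turns the powers `e^s` in front of `A` into the entries of `φ_i(e)`, and the
powers `e^{(m-ξ)+s}` in front of `B` into `e^{m-εξ}` times the entries of `φ_j(e)`, because
`(i-1)ξ + (m-ξ) = (m-εξ) + (j-1)ξ` for `ε = j-i+1`.
-/

/-- The row vector `ψ_m(e) = (e^0, e^1, …, e^{m-1}) ∈ F^m`. -/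
def psiVec {F : Type*} [Field F] (m : ℕ) (e : F) : Fin m → F :=
  fun t => e ^ (t : ℕ)

/-- The row vector `φ_ℓ(e) = (e^{(ℓ-1)ξ}, …, e^{ℓξ-1}) ∈ F^ξ`. -/
def phiVec {F : Type*} [Field F] (ξ : ℕ) (ℓ : ℕ) (e : F) : Fin ξ → F :=
  fun t => e ^ ((ℓ - 1) * ξ + (t : ℕ))

/-- The merge operator `Φ_{m,ε}(e, v, u) ∈ F^m` with `t`-th entry
`(if t < ξ then v_t else 0) + e^{m - εξ} · (if m - ξ ≤ t then u_{t-(m-ξ)} else 0)`,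
where the exponent `m - εξ` is an integer (possibly negative). -/
def mergeOp {F : Type*} [Field F] (ξ m ε : ℕ) (hm : m < 2 * ξ) (e : F)
    (v u : Fin ξ → F) : Fin m → F :=
  fun t =>
    (if h : (t : ℕ) < ξ then v ⟨t, h⟩ else 0) +
      e ^ ((m : ℤ) - (ε : ℤ) * (ξ : ℤ)) *
        (if h : m - ξ ≤ (t : ℕ) then
          u ⟨(t : ℕ) - (m - ξ), by have := t.isLt; omega⟩ else 0)

/-- The `m × m` matrix `Λ` built from the symmetric blocks `A` (top-left) and
`B` (bottom-right, offset by `m - ξ`). -/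
def lambdaMat {F : Type*} [Field F] (ξ m : ℕ)
    (A B : Matrix (Fin ξ) (Fin ξ) F) : Matrix (Fin m) (Fin m) F :=
  Matrix.of fun t u : Fin m =>
    (if h : (t : ℕ) < ξ ∧ (u : ℕ) < ξ then A ⟨t, h.1⟩ ⟨u, h.2⟩ else 0) +
    (if h : m - ξ ≤ (t : ℕ) ∧ m - ξ ≤ (u : ℕ) then
        B ⟨(t : ℕ) - (m - ξ), by have := t.isLt; omega⟩
          ⟨(u : ℕ) - (m - ξ), by have := u.isLt; omega⟩
      else 0)

theorem sum_dite_lt {F : Type*} [Field F] {ξ m : ℕ} (h : ξ ≤ m) (f : Fin ξ → F) :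
    ∑ t : Fin m, (if ht : (t : ℕ) < ξ then f ⟨t, ht⟩ else 0) = ∑ s, f s := by
  obtain ⟨k, rfl⟩ := Nat.exists_eq_add_of_le h
  simp [Fin.sum_univ_add]

theorem sum_dite_ge {F : Type*} [Field F] {ξ m : ℕ} (h : ξ ≤ m) (f : Fin ξ → F) :
    ∑ t : Fin m, (if ht : m - ξ ≤ (t : ℕ) then
      f ⟨(t : ℕ) - (m - ξ), by have := t.isLt; omega⟩ else 0) = ∑ s, f s := by
  obtain ⟨k, rfl⟩ := Nat.exists_eq_add_of_le' h
  have hk : ∀ x : Fin k, ¬ k ≤ (x : ℕ) := fun x => by omega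
  simp [Fin.sum_univ_add, hk]

/-- The exponent identity `(m-εξ) + (j-1)ξ + s = (i-1)ξ + (m-ξ) + s`, with `ε = j-i+1`; the exponent
`m-εξ` may be negative, hence the need for `e ≠ 0`. -/
theorem zpow_mul_phi {F : Type*} [Field F] {ξ m i j : ℕ} (hξm : ξ ≤ m) (hi : 1 ≤ i) (hij : i < j)
    {e : F} (he : e ≠ 0) (s : ℕ) :
    e ^ ((m : ℤ) - ((j - i + 1 : ℕ) : ℤ) * (ξ : ℤ)) * e ^ ((j - 1) * ξ + s)
      = e ^ ((i - 1) * ξ) * e ^ (s + (m - ξ)) := by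
  rw [← zpow_natCast e ((j - 1) * ξ + s), ← zpow_add₀ he, ← pow_add, ← zpow_natCast e]
  congr 1
  push_cast [Nat.cast_sub hij.le, Nat.cast_sub hξm, Nat.cast_sub hi, Nat.cast_sub (hi.trans hij.le)]
  ring

/-- eq. (40) of the paper: the merged segment of a node with element `e`
equals `e^{(i-1)ξ}` times the row-vector–matrix product `ψ_m(e) · Λ`:
`Φ_{m,ε}(e, χᴬ(e), χᴮ(e)) = e^{(i-1)ξ} · (ψ_m(e) ᵥ* Λ)`. -/
theorem merge_eq_psi_vecMul_lambda
    {F : Type*} [Field F] (ξ m i j : ℕ)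
    (hξ : 0 < ξ) (hξm : ξ ≤ m) (hm : m < 2 * ξ) (hi : 1 ≤ i) (hij : i < j)
    (A B : Matrix (Fin ξ) (Fin ξ) F) (hA : A.IsSymm) (hB : B.IsSymm)
    (e : F) (he : e ≠ 0) :
    mergeOp ξ m (j - i + 1) hm e
        (Matrix.vecMul (phiVec ξ i e) A) (Matrix.vecMul (phiVec ξ j e) B)
    = fun t => e ^ ((i - 1) * ξ) * Matrix.vecMul (psiVec m e) (lambdaMat ξ m A B) t := by
  funext t
  simp only [mergeOp, Matrix.vecMul, dotProduct, psiVec, phiVec, lambdaMat, Matrix.of_apply,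
    mul_add, Finset.sum_add_distrib]
  congr 1
  · split_ifs with ht
    · rw [← sum_dite_lt hξm, Finset.mul_sum]
      refine Finset.sum_congr rfl fun x _ => ?_
      by_cases hx : (x : ℕ) < ξ
      · simp [hx, ht, pow_add, mul_assoc]
      · simp [hx]
    · simp [ht]
  · split_ifs with ht
    · rw [Finset.mul_sum, ← sum_dite_ge hξm, Finset.mul_sum]
      refine Finset.sum_congr rfl fun x _ => ?_
      by_cases hx : m - ξ ≤ (x : ℕ)
      · rw [dif_pos hx, dif_pos ⟨hx, ht⟩, ← mul_assoc, zpow_mul_phi hξm hi hij he,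
          Nat.sub_add_cancel hx, mul_assoc]
      · rw [dif_neg hx, dif_neg fun h => hx h.1, mul_zero, mul_zero]
    · simp [ht]
end

section
/- With the determinant-exponent setup below, let σ be a permutation of Fin α that is NOT block-preserving. Then there exists a permutation σ' of Fin α with pow(σ) < pow(σ'). -/
/-!
A permutation that is not block-preserving has an inversion across blocks: rows `r₁`, `r₂` with
`⌊r₁/s⌋ < ⌊r₂/s⌋` and `σ r₂ < σ r₁` (`exists_block_inversion`). Exchanging the images of these two
rows increases the exponent. If `σ r₁` and `σ r₂` lie in different column blocks of size `w`, the
`i`-part grows by at least `i ⌊r₂/s⌋ - i ⌊r₁/s⌋ > α * n`, which outweighs any loss in the `h`-part,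
as that loss is at most `(r₂ - r₁) * n ≤ α * n`. If they lie in the same column block, the `i`-part
is unchanged and the `h`-part grows by the rearrangement inequality, since `h` is strictly
increasing. Both cases are instances of `exchange_lt`.
-/

/-- `pow σ = Σ_{r} ( ⌊σ(r)/w⌋ · i(⌊r/s⌋) + r · h(σ(r) mod w) )`, the exponent of the
primitive element `g` in the Leibniz-expansion term of `det Ξ` associated with the
permutation `σ` of `Fin α`. -/
def powPerm (α s w z : ℕ) (hw : 0 < w) (hsα : s ∣ α) (hz : z = α / s)
    (h : Fin w → ℕ) (i : Fin z → ℕ) (σ : Equiv.Perm (Fin α)) : ℕ :=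
  ∑ r : Fin α,
    ((σ r : ℕ) / w *
        i ⟨(r : ℕ) / s, by rw [hz]; exact Nat.div_lt_div_of_lt_of_dvd hsα r.isLt⟩
      + (r : ℕ) * h ⟨(σ r : ℕ) % w, Nat.mod_lt _ hw⟩)

/-- `σ` is block-preserving if it maps each block row of size `s` to the block column
of size `s` with the same index: `⌊σ(r)/s⌋ = ⌊r/s⌋` for all `r`. -/
def IsBlockPreserving (α s : ℕ) (σ : Equiv.Perm (Fin α)) : Prop :=
  ∀ r : Fin α, (σ r : ℕ) / s = (r : ℕ) / s

/-- If there were no inversion across blocks, then for a row `r` of block `k` the `k * s` rows of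
the earlier blocks would all map below `σ r`, and every column up to `σ r` would come from the first
`(k + 1) * s` rows; hence `k * s ≤ σ r < (k + 1) * s`. -/
theorem exists_block_inversion (α s : ℕ) (hs : 0 < s) (σ : Equiv.Perm (Fin α))
    (hσ : ¬ IsBlockPreserving α s σ) :
    ∃ r₁ r₂ : Fin α, (r₁ : ℕ) / s < (r₂ : ℕ) / s ∧ σ r₂ < σ r₁ := by
  by_contra! hno
  apply hσ
  intro r
  have hlow : (r : ℕ) / s * s ≤ σ r := by
    have hle : (r : ℕ) / s * s ≤ r := Nat.div_mul_le_self _ _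
    have hc := Finset.card_le_card_of_injOn
      (s := Finset.Iio (⟨(r : ℕ) / s * s, hle.trans_lt r.isLt⟩ : Fin α))
      (t := Finset.Iio (σ r)) σ ?_ σ.injective.injOn
    · simpa using hc
    · intro x hx
      have hx' : (x : ℕ) < (r : ℕ) / s * s := by simpa [Fin.lt_def] using hx
      have hlt : (x : ℕ) / s < (r : ℕ) / s := (Nat.div_lt_iff_lt_mul hs).2 hx'
      have hne : σ x ≠ σ r := by
        intro he
        rw [σ.injective he] at hlt
        exact lt_irrefl _ hlt
      simpa using lt_of_le_of_ne (hno x r hlt) hne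
  have hhigh : (σ r : ℕ) + 1 ≤ ((r : ℕ) / s + 1) * s := by
    have hc := Finset.card_le_card_of_injOn
      (s := Finset.Iic (σ r)) (t := Finset.range (((r : ℕ) / s + 1) * s))
      (fun y => (σ.symm y : ℕ)) ?_ (Fin.val_injective.comp σ.symm.injective).injOn
    · simpa using hc
    · intro y hy
      have hy' : y ≤ σ r := by simpa using hy
      simp only [Finset.coe_range, Set.mem_Iio]
      rw [← Nat.div_lt_iff_lt_mul hs]
      by_contra! hge
      have h1 := hno r (σ.symm y) hge
      rw [Equiv.apply_symm_apply] at h1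
      have he : y = σ r := le_antisymm hy' h1
      rw [he, Equiv.symm_apply_apply] at hge
      omega
  exact Nat.div_eq_of_lt_le hlow hhigh

theorem sum_lt_sum_swap {ι : Type*} [Fintype ι] [DecidableEq ι] (f : ι → ι → ℕ)
    (σ : Equiv.Perm ι) (a b : ι) (hab : a ≠ b)
    (hlt : f a (σ a) + f b (σ b) < f a (σ b) + f b (σ a)) :
    ∑ r, f r (σ r) < ∑ r, f r ((σ * Equiv.swap a b) r) := by
  have hb : b ∈ Finset.univ.erase a := by simp [hab.symm]
  rw [← Finset.add_sum_erase _ _ (Finset.mem_univ a), ← Finset.add_sum_erase _ _ hb,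
    ← Finset.add_sum_erase _ (fun r => f r ((σ * Equiv.swap a b) r)) (Finset.mem_univ a),
    ← Finset.add_sum_erase _ (fun r => f r ((σ * Equiv.swap a b) r)) hb]
  have hrest : ∑ r ∈ (Finset.univ.erase a).erase b, f r ((σ * Equiv.swap a b) r)
      = ∑ r ∈ (Finset.univ.erase a).erase b, f r (σ r) := by
    refine Finset.sum_congr rfl fun r hr => ?_
    simp only [Finset.mem_erase, Finset.mem_univ, and_true] at hr
    rw [Equiv.Perm.mul_apply, Equiv.swap_apply_of_ne_of_ne hr.2 hr.1]
  rw [hrest]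
  simp only [Equiv.Perm.mul_apply, Equiv.swap_apply_left, Equiv.swap_apply_right]
  omega

/-- The two-row exchange inequality. Rows `x < y` carry weights `I < J` with gap above `M`; the
columns have block quotients `p` (for row `x`) and `q` (for row `y`) and helper values `u` and `v`.
The bound `y * v ≤ M` limits what the exchange can lose in the helper part. -/
theorem exchange_lt {I J M x y p q u v : ℕ} (hgap : M < J - I) (hxy : x < y)
    (hM : y * v ≤ M) (hpq : q < p ∨ (p = q ∧ v < u)) :
    (p * I + x * u) + (q * J + y * v) < (q * I + x * v) + (p * J + y * u) := by
  obtain ⟨D, rfl⟩ : ∃ D, J = I + D := ⟨J - I, by omega⟩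
  obtain ⟨e, rfl⟩ : ∃ e, y = x + e := ⟨y - x, by omega⟩
  rcases hpq with hlt | ⟨rfl, hlt⟩
  · obtain ⟨t, rfl⟩ : ∃ t, p = q + 1 + t := ⟨p - (q + 1), by omega⟩
    have hD : M < D := by omega
    nlinarith [Nat.zero_le (t * D), Nat.zero_le (e * u), Nat.zero_le (x * v)]
  · obtain ⟨t, rfl⟩ : ∃ t, u = v + 1 + t := ⟨u - (v + 1), by omega⟩
    nlinarith [Nat.zero_le (e * t)]

/-- Lemma 5 of the paper: any permutation of `Fin α` that is not
block-preserving is beaten by some other permutation: there is `σ'` with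
`pow(σ) < pow(σ')`. -/
theorem not_blockPreserving_exists_larger_pow
    (n b dmin d α s w z : ℕ)
    (hb : 0 < b) (h2b : 2 * b < dmin) (hdmind : dmin ≤ d) (hdn : d ≤ n) (hα : 0 < α)
    (hs : s = dmin - 2 * b) (hw : w = d - 2 * b)
    (hsα : s ∣ α) (hwα : w ∣ α) (hz : z = α / s)
    (h : Fin w → ℕ) (hmono : StrictMono h) (hrange : ∀ ℓ, 1 ≤ h ℓ ∧ h ℓ ≤ n)
    (i : Fin z → ℕ) (himono : StrictMono i)
    (higap : ∀ ℓ₁ ℓ₂ : Fin z, ℓ₁ < ℓ₂ → α * n < i ℓ₂ - i ℓ₁)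
    (σ : Equiv.Perm (Fin α))
    (hσ : ¬ IsBlockPreserving α s σ) :
    ∃ σ' : Equiv.Perm (Fin α),
      powPerm α s w z (by omega) hsα hz h i σ <
        powPerm α s w z (by omega) hsα hz h i σ' := by
  obtain ⟨r₁, r₂, hblk, hinv⟩ := exists_block_inversion α s (by omega) σ hσ
  have hr : (r₁ : ℕ) < r₂ := by
    by_contra! hle
    exact absurd (Nat.div_le_div_right (c := s) hle) (not_le.2 hblk)
  have hinv' : (σ r₂ : ℕ) < σ r₁ := hinv
  have hw0 : 0 < w := by omega
  refine ⟨σ * Equiv.swap r₁ r₂, ?_⟩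
  refine sum_lt_sum_swap (fun r c : Fin α => (c : ℕ) / w *
      i ⟨(r : ℕ) / s, by rw [hz]; exact Nat.div_lt_div_of_lt_of_dvd hsα r.isLt⟩
      + (r : ℕ) * h ⟨(c : ℕ) % w, Nat.mod_lt _ hw0⟩) σ r₁ r₂ (Fin.ne_of_lt hr) ?_
  refine exchange_lt (higap _ _ hblk) hr (Nat.mul_le_mul r₂.isLt.le (hrange _).2) ?_
  rcases (Nat.div_le_div_right (c := w) hinv'.le).lt_or_eq with hlt | heq
  · exact Or.inl hlt
  · refine Or.inr ⟨heq.symm, hmono ?_⟩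
    have h1 := Nat.div_add_mod (σ r₁ : ℕ) w
    have h2 := Nat.div_add_mod (σ r₂ : ℕ) w
    rw [heq] at h2
    rw [Fin.mk_lt_mk]
    omega
end

section
/- With the determinant-exponent setup below, if a permutation σ of Fin α attains the maximum of pow over all permutations of Fin α (i.e. pow(σ') ≤ pow(σ) for every permutation σ'), then σ is block-preserving. -/
/-- Multiplying by a transposition changes an assignment sum only at the two swapped rows. -/
lemma exchange_le {α : ℕ} (f : Fin α → Fin α → ℕ) (σ : Equiv.Perm (Fin α)) {r₁ r₂ : Fin α}
    (hne : r₁ ≠ r₂)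
    (hle : ∑ r, f r ((σ * Equiv.swap r₁ r₂) r) ≤ ∑ r, f r (σ r)) :
    f r₁ (σ r₂) + f r₂ (σ r₁) ≤ f r₁ (σ r₁) + f r₂ (σ r₂) := by
  rw [← Finset.sum_sdiff (Finset.subset_univ {r₁, r₂}),
    ← Finset.sum_sdiff (Finset.subset_univ {r₁, r₂}) (f := fun r => f r (σ r)),
    Finset.sum_pair hne, Finset.sum_pair hne] at hle
  have heq : ∑ r ∈ Finset.univ \ {r₁, r₂}, f r ((σ * Equiv.swap r₁ r₂) r)
      = ∑ r ∈ Finset.univ \ {r₁, r₂}, f r (σ r) := by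
    refine Finset.sum_congr rfl fun r hr => ?_
    simp only [Finset.mem_sdiff, Finset.mem_univ, true_and, Finset.mem_insert,
      Finset.mem_singleton, not_or] at hr
    rw [Equiv.Perm.mul_apply, Equiv.swap_apply_of_ne_of_ne hr.1 hr.2]
  rw [heq] at hle
  simpa using hle

/-- If exchanging the images of rows `r₁ < r₂` does not increase the exponent, then the column
quotients and helper indices are not lexicographically inverted. -/
lemma no_inversion_arith {α n r₁ r₂ q₁ q₂ I₁ I₂ H₁ H₂ : ℕ} (hr : r₁ < r₂) (hr₂ : r₂ < α)
    (hgap : α * n < I₂ - I₁) (hH : H₂ ≤ n)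
    (hinv : q₂ < q₁ ∨ q₂ = q₁ ∧ H₂ < H₁) :
    ¬ (q₂ * I₁ + r₁ * H₂ + (q₁ * I₂ + r₂ * H₁) ≤
      q₁ * I₁ + r₁ * H₁ + (q₂ * I₂ + r₂ * H₂)) := by
  intro hle
  obtain ⟨D, rfl⟩ : ∃ D, I₂ = I₁ + D := ⟨I₂ - I₁, by omega⟩
  obtain ⟨t, rfl⟩ : ∃ t, r₂ = r₁ + t := ⟨r₂ - r₁, by omega⟩
  rw [Nat.add_sub_cancel_left] at hgap
  have hred : q₁ * D + t * H₁ ≤ q₂ * D + t * H₂ := by linarith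
  rcases hinv with hq | ⟨rfl, hlt⟩
  · have hD : (q₂ + 1) * D ≤ q₁ * D := Nat.mul_le_mul_right D hq
    have htH : t * H₂ ≤ α * n := Nat.mul_le_mul (by omega) hH
    have := Nat.zero_le (t * H₁)
    linarith
  · have := Nat.mul_lt_mul_of_pos_left hlt (show 0 < t by omega)
    omega

/-- A permutation that is strictly increasing between different blocks preserves the blocks. -/
lemma isBlockPreserving_of_lt {α s : ℕ} (hs : 0 < s) (σ : Equiv.Perm (Fin α))
    (hσ : ∀ r₁ r₂ : Fin α, (r₁ : ℕ) / s < (r₂ : ℕ) / s → σ r₁ < σ r₂) :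
    IsBlockPreserving α s σ := by
  have hle : ∀ r : Fin α, (r : ℕ) / s ≤ (σ r : ℕ) / s := by
    intro r
    rw [Nat.le_div_iff_mul_le hs]
    have hk : (r : ℕ) / s * s < α := (Nat.div_mul_le_self _ _).trans_lt r.isLt
    have hcard : (Finset.Iio (⟨(r : ℕ) / s * s, hk⟩ : Fin α)).card ≤ (Finset.Iio (σ r)).card := by
      refine Finset.card_le_card_of_injOn σ (fun x hx => ?_) σ.injective.injOn
      have hx' : (x : ℕ) < (r : ℕ) / s * s := by
        simpa [Fin.lt_def] using hx
      simpa using hσ x r ((Nat.div_lt_iff_lt_mul hs).2 hx')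
    simpa using hcard
  have hsum : ∑ r : Fin α, (r : ℕ) / s = ∑ r : Fin α, (σ r : ℕ) / s :=
    (Equiv.sum_comp σ fun r : Fin α => (r : ℕ) / s).symm
  intro r
  exact ((Finset.sum_eq_sum_iff_of_le fun r _ => hle r).1 hsum r (Finset.mem_univ r)).symm

/-- Corollary 2 of the paper: any permutation attaining the maximum
of `pow` over all permutations of `Fin α` is block-preserving. -/
theorem pow_maximizer_isBlockPreserving
    (n b dmin d α s w z : ℕ)
    (hb : 0 < b) (h2b : 2 * b < dmin) (hdmind : dmin ≤ d) (hdn : d ≤ n) (hα : 0 < α)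
    (hs : s = dmin - 2 * b) (hw : w = d - 2 * b)
    (hsα : s ∣ α) (hwα : w ∣ α) (hz : z = α / s)
    (h : Fin w → ℕ) (hmono : StrictMono h) (hrange : ∀ ℓ, 1 ≤ h ℓ ∧ h ℓ ≤ n)
    (i : Fin z → ℕ) (himono : StrictMono i)
    (higap : ∀ ℓ₁ ℓ₂ : Fin z, ℓ₁ < ℓ₂ → α * n < i ℓ₂ - i ℓ₁)
    (σ : Equiv.Perm (Fin α))
    (hmax : ∀ σ' : Equiv.Perm (Fin α),
      powPerm α s w z (by omega) hsα hz h i σ' ≤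
        powPerm α s w z (by omega) hsα hz h i σ) :
    IsBlockPreserving α s σ := by
  have hs0 : 0 < s := by omega
  have hw0 : 0 < w := by omega
  refine isBlockPreserving_of_lt hs0 σ fun r₁ r₂ hblock => ?_
  have hr : r₁ < r₂ := by
    by_contra hcon
    exact absurd (Nat.div_le_div_right (c := s) (Fin.le_def.1 (not_lt.1 hcon))) (by omega)
  by_contra hcon
  have hc : (σ r₂ : ℕ) < (σ r₁ : ℕ) :=
    lt_of_le_of_ne (not_lt.1 hcon) fun heq => hr.ne' (σ.injective (Fin.ext heq))
  have hex := exchange_le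
    (fun r c => (c : ℕ) / w *
        i ⟨(r : ℕ) / s, by rw [hz]; exact Nat.div_lt_div_of_lt_of_dvd hsα r.isLt⟩
      + (r : ℕ) * h ⟨(c : ℕ) % w, Nat.mod_lt _ hw0⟩) σ hr.ne (hmax (σ * Equiv.swap r₁ r₂))
  refine no_inversion_arith hr r₂.isLt (higap _ _ (Fin.mk_lt_mk.2 hblock)) (hrange _).2 ?_ hex
  rcases (Nat.div_le_div_right (c := w) hc.le).lt_or_eq with hq | hq
  · exact Or.inl hq
  · refine Or.inr ⟨hq, hmono (Fin.mk_lt_mk.2 ?_)⟩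
    have h₁ := Nat.div_add_mod (σ r₁ : ℕ) w
    have h₂ := Nat.div_add_mod (σ r₂ : ℕ) w
    rw [hq] at h₂
    omega
end

section
/- With the determinant-exponent setup below, consider the integer polynomial P(X) := Σ_σ sign(σ) · X^{pow(σ)} ∈ ℤ[X], where the sum ranges over all permutations σ of Fin α and sign(σ) ∈ {1, −1} is the signature of σ. Then P ≠ 0 and the leading coefficient of P is 1 or −1. -/
/-- The exchange inequality for a permutation maximizing `Σ_r f r (σ r)`. -/
lemma exchange {ι : Type*} [Fintype ι] [DecidableEq ι] (f : ι → ι → ℕ) (σ : Equiv.Perm ι)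
    (hmax : ∀ τ : Equiv.Perm ι, ∑ r, f r (τ r) ≤ ∑ r, f r (σ r)) {a b : ι} (hab : a ≠ b) :
    f a (σ b) + f b (σ a) ≤ f a (σ a) + f b (σ b) := by
  have hm := hmax (σ * Equiv.swap a b)
  rw [← Finset.sum_add_sum_compl {a, b}, ← Finset.sum_add_sum_compl {a, b} (fun r => f r (σ r)),
    Finset.sum_pair hab, Finset.sum_pair hab] at hm
  have hrest : ∑ r ∈ ({a, b} : Finset ι)ᶜ, f r ((σ * Equiv.swap a b) r)
      = ∑ r ∈ ({a, b} : Finset ι)ᶜ, f r (σ r) := by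
    refine Finset.sum_congr rfl fun r hr => ?_
    simp only [Finset.mem_compl, Finset.mem_insert, Finset.mem_singleton, not_or] at hr
    rw [Equiv.Perm.mul_apply, Equiv.swap_apply_of_ne_of_ne hr.1 hr.2]
  rw [hrest] at hm
  simpa using hm

/-- If the exchange inequality holds for rows `r₁ < r₂` whose exponents `I₁`, `I₂` are more than
`α * n` apart, then the columns `c₁`, `c₂` are in increasing order. -/
lemma lt_of_exchange {n α w : ℕ} {H : ℕ → ℕ}
    (hH : ∀ c c', c % w < c' % w → H c < H c') (hHn : ∀ c, H c ≤ n)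
    {r₁ r₂ c₁ c₂ I₁ I₂ : ℕ} (hr : r₁ < r₂) (hrα : r₂ < α) (hc : c₁ ≠ c₂) (hI : α * n < I₂ - I₁)
    (hex : c₂ / w * I₁ + r₁ * H c₂ + (c₁ / w * I₂ + r₂ * H c₁)
      ≤ c₁ / w * I₁ + r₁ * H c₁ + (c₂ / w * I₂ + r₂ * H c₂)) : c₁ < c₂ := by
  by_contra hcon
  have hlt : c₂ < c₁ := by omega
  obtain ⟨D, rfl⟩ : ∃ D, I₂ = I₁ + D := ⟨I₂ - I₁, by omega⟩
  have hD : α * n < D := by omega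
  obtain ⟨e, rfl⟩ : ∃ e, r₂ = r₁ + e := ⟨r₂ - r₁, by omega⟩
  have hex' : c₁ / w * D + e * H c₁ ≤ c₂ / w * D + e * H c₂ := by linarith
  rcases (Nat.div_le_div_right (c := w) hlt.le).lt_or_eq with hA | hA
  · have h1 : (c₂ / w + 1) * D ≤ c₁ / w * D := Nat.mul_le_mul_right _ hA
    have h2 : e * H c₂ ≤ α * n := Nat.mul_le_mul (by omega) (hHn _)
    have h3 : 0 ≤ e * H c₁ := Nat.zero_le _
    linarith
  · have hmod : c₂ % w < c₁ % w := by
      have e1 := Nat.div_add_mod c₁ w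
      have e2 := Nat.div_add_mod c₂ w
      rw [hA] at e2
      omega
    have h1 : e * H c₂ < e * H c₁ := Nat.mul_lt_mul_of_pos_left (hH _ _ hmod) (by omega)
    rw [hA] at hex'
    omega

/-- A permutation that is increasing across blocks of size `s` preserves the blocks: the rows of
the lower blocks map below `σ r`, those of the higher blocks above it. -/
lemma div_eq_of_block_lt {α s : ℕ} (hs : 0 < s) (hsα : s ∣ α) (σ : Equiv.Perm (Fin α))
    (hσ : ∀ a b : Fin α, (a : ℕ) / s < (b : ℕ) / s → σ a < σ b) (r : Fin α) :
    (σ r : ℕ) / s = (r : ℕ) / s := by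
  have hle : ((r : ℕ) / s + 1) * s ≤ α := by
    have := Nat.div_lt_div_of_lt_of_dvd hsα r.isLt
    calc ((r : ℕ) / s + 1) * s ≤ α / s * s := Nat.mul_le_mul_right _ this
      _ = α := Nat.div_mul_cancel hsα
  have hlow : (r : ℕ) / s * s ≤ σ r := by
    have hk : (r : ℕ) / s * s < α := lt_of_le_of_lt (Nat.div_mul_le_self _ _) r.isLt
    have := Finset.card_le_card_of_injOn (s := Finset.Iio (⟨(r : ℕ) / s * s, hk⟩ : Fin α))
      (t := Finset.Iio (σ r)) σ (fun a ha => by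
        simp only [Finset.coe_Iio, Set.mem_Iio, Fin.lt_def] at ha ⊢
        exact hσ a r ((Nat.div_lt_iff_lt_mul hs).2 ha)) σ.injective.injOn
    simpa using this
  have hhigh : (σ r : ℕ) < ((r : ℕ) / s + 1) * s := by
    -- every column up to `σ r` comes from a row whose block is at most that of `r`
    have hk : ((r : ℕ) / s + 1) * s - 1 < α := by have := r.isLt; omega
    have hpos : 0 < ((r : ℕ) / s + 1) * s := Nat.mul_pos (Nat.succ_pos _) hs
    have := Finset.card_le_card_of_injOn (s := Finset.Iic (σ r))
      (t := Finset.Iic (⟨((r : ℕ) / s + 1) * s - 1, hk⟩ : Fin α)) σ.symm (fun c hc => by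
        simp only [Finset.coe_Iic, Set.mem_Iic, Fin.le_def] at hc ⊢
        by_contra hcon
        have h1 : (r : ℕ) / s < (σ.symm c : ℕ) / s :=
          (Nat.le_div_iff_mul_le hs).2 (by rw [Nat.succ_eq_add_one]; omega)
        have h2 := hσ r (σ.symm c) h1
        rw [Equiv.apply_symm_apply] at h2
        exact absurd hc (not_le.2 h2)) σ.symm.injective.injOn
    simp only [Fin.card_Iic] at this
    omega
  exact Nat.div_eq_of_lt_le hlow hhigh

lemma perm_eq_of_strictMono {α : ℕ} (key : Fin α → ℕ) (σ τ : Equiv.Perm (Fin α))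
    (hσ : StrictMono (key ∘ σ)) (hτ : StrictMono (key ∘ τ)) : σ = τ := by
  have hkey : Function.Injective key := by
    have := hσ.injective.comp σ.symm.injective
    simpa [Function.comp_assoc] using this
  have heq : key ∘ σ = key ∘ τ := by
    rw [← StrictMono.range_inj hσ hτ]
    simp [Set.range_comp]
  exact Equiv.ext fun r => hkey (congrFun heq r)

/-- Congruent numbers in one window of length `s ≤ w` coincide. -/
lemma eq_of_div_eq_of_mod_eq {s w c c' : ℕ} (hs : 0 < s) (hsw : s ≤ w) (hdiv : c / s = c' / s)
    (hmod : c % w = c' % w) : c = c' := by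
  have e1 := Nat.div_add_mod c s
  have e2 := Nat.div_add_mod c' s
  rw [hdiv] at e1
  have m1 := Nat.mod_lt c hs
  have m2 := Nat.mod_lt c' hs
  refine Nat.ModEq.eq_of_abs_lt (m := w) hmod ?_
  rw [abs_lt]
  omega

/-- If a permutation strictly maximizes the exponent `p`, the leading coefficient of the signed
sum `Σ_σ sign σ · X ^ p σ` is its sign. -/
lemma leadingCoeff_of_unique_max {α : ℕ} (p : Equiv.Perm (Fin α) → ℕ) (σ : Equiv.Perm (Fin α))
    (hσ : ∀ τ, τ ≠ σ → p τ < p σ) :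
    (∑ τ : Equiv.Perm (Fin α), Polynomial.C ((Equiv.Perm.sign τ : ℤ)) *
      Polynomial.X ^ p τ).leadingCoeff = (Equiv.Perm.sign σ : ℤ) := by
  set Q : Polynomial ℤ := ∑ τ : Equiv.Perm (Fin α), Polynomial.C ((Equiv.Perm.sign τ : ℤ)) *
      Polynomial.X ^ p τ with hQ
  have hcoeff : Q.coeff (p σ) = (Equiv.Perm.sign σ : ℤ) := by
    rw [hQ, Polynomial.finsetSum_coeff, Finset.sum_eq_single σ]
    · rw [Polynomial.coeff_C_mul_X_pow, if_pos rfl]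
    · intro τ _ hτ
      rw [Polynomial.coeff_C_mul_X_pow, if_neg (hσ τ hτ).ne']
    · simp
  have hdeg : Q.natDegree ≤ p σ := by
    refine Polynomial.natDegree_sum_le_of_forall_le _ _ fun τ _ => ?_
    refine (Polynomial.natDegree_C_mul_X_pow_le _ _).trans ?_
    by_cases hτ : τ = σ
    · rw [hτ]
    · exact (hσ τ hτ).le
  have hne : Q.coeff (p σ) ≠ 0 := by rw [hcoeff]; exact Units.ne_zero _
  rw [Polynomial.leadingCoeff, le_antisymm hdeg (Polynomial.le_natDegree_of_ne_zero hne), hcoeff]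

/-- the determinant polynomial
`P(X) = Σ_σ sign(σ) · X^{pow(σ)} ∈ ℤ[X]` is nonzero and has leading coefficient
`1` or `-1` (since the term with the largest exponent of `g` is unique). -/
theorem determinant_polynomial_ne_zero_leadingCoeff
    (n b dmin d α s w z : ℕ)
    (hb : 0 < b) (h2b : 2 * b < dmin) (hdmind : dmin ≤ d) (hdn : d ≤ n) (hα : 0 < α)
    (hs : s = dmin - 2 * b) (hw : w = d - 2 * b)
    (hsα : s ∣ α) (hwα : w ∣ α) (hz : z = α / s)
    (h : Fin w → ℕ) (hmono : StrictMono h) (hrange : ∀ ℓ, 1 ≤ h ℓ ∧ h ℓ ≤ n)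
    (i : Fin z → ℕ) (himono : StrictMono i)
    (higap : ∀ ℓ₁ ℓ₂ : Fin z, ℓ₁ < ℓ₂ → α * n < i ℓ₂ - i ℓ₁)
    (P : Polynomial ℤ)
    (hP : P = ∑ σ : Equiv.Perm (Fin α),
      Polynomial.C ((Equiv.Perm.sign σ : ℤ)) *
        Polynomial.X ^ powPerm α s w z (by omega) hsα hz h i σ) :
    P ≠ 0 ∧ (P.leadingCoeff = 1 ∨ P.leadingCoeff = -1) := by
  have hw0 : 0 < w := by omega
  have hs0 : 0 < s := by omega
  have hsw : s ≤ w := by omega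
  let H : ℕ → ℕ := fun c => h ⟨c % w, Nat.mod_lt _ hw0⟩
  let I : Fin α → ℕ := fun r =>
    i ⟨(r : ℕ) / s, by rw [hz]; exact Nat.div_lt_div_of_lt_of_dvd hsα r.isLt⟩
  let W : Fin α → Fin α → ℕ := fun r c => (c : ℕ) / w * I r + (r : ℕ) * H c
  let p : Equiv.Perm (Fin α) → ℕ := fun σ => ∑ r, W r (σ r)
  have hH : ∀ c c', c % w < c' % w → H c < H c' := fun c c' hcc => hmono hcc
  have hHn : ∀ c, H c ≤ n := fun c => (hrange _).2
  let key : Fin α → ℕ := fun c => (c : ℕ) / s * w + (c : ℕ) % w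
  have hkey : ∀ σ, (∀ τ, p τ ≤ p σ) → StrictMono (key ∘ σ) := by
    intro σ hmax
    have hex : ∀ {a b : Fin α}, a ≠ b → W a (σ b) + W b (σ a) ≤ W a (σ a) + W b (σ b) :=
      fun hab => exchange W σ hmax hab
    have hblock : ∀ a b : Fin α, (a : ℕ) / s < (b : ℕ) / s → σ a < σ b := by
      intro a b hab
      have hlt : (a : ℕ) < b := Nat.lt_of_div_lt_div hab
      have hne : a ≠ b := fun e => by simp [e] at hlt
      exact lt_of_exchange hH hHn hlt b.isLt
        (fun e => hne (σ.injective (Fin.ext e))) (higap _ _ hab) (hex hne)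
    have hdiv := div_eq_of_block_lt hs0 hsα σ hblock
    intro a b hab
    have hab' : (a : ℕ) < b := hab
    change (σ a : ℕ) / s * w + (σ a : ℕ) % w < (σ b : ℕ) / s * w + (σ b : ℕ) % w
    rw [hdiv a, hdiv b]
    rcases (Nat.div_le_div_right (c := s) hab'.le).lt_or_eq with hlt | heq
    · have h1 : ((a : ℕ) / s + 1) * w ≤ (b : ℕ) / s * w := Nat.mul_le_mul_right _ hlt
      have h2 := Nat.mod_lt (σ a : ℕ) hw0
      rw [Nat.add_mul, Nat.one_mul] at h1
      omega
    · rw [heq]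
      refine Nat.add_lt_add_left ?_ _
      by_contra hcon
      rcases (not_lt.1 hcon).lt_or_eq with hmod | hmod
      · have hIeq : I a = I b := by simp only [I, heq]
        have hx := hex hab.ne
        simp only [W, hIeq] at hx
        have hlt := hH _ _ hmod
        obtain ⟨e, he⟩ : ∃ e, (b : ℕ) = a + (e + 1) := ⟨b - a - 1, by omega⟩
        rw [he] at hx
        nlinarith
      · have := eq_of_div_eq_of_mod_eq hs0 hsw
          (show (σ a : ℕ) / s = (σ b : ℕ) / s by rw [hdiv, hdiv, heq]) hmod.symm
        exact hab.ne (σ.injective (Fin.ext this))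
  obtain ⟨σ, hσ⟩ := Finite.exists_max p
  have huniq : ∀ τ, τ ≠ σ → p τ < p σ := by
    intro τ hne
    refine (hσ τ).lt_of_ne fun heq => hne ?_
    exact perm_eq_of_strictMono key τ σ (hkey τ fun ρ => heq ▸ hσ ρ) (hkey σ hσ)
  have hlead : P.leadingCoeff = (Equiv.Perm.sign σ : ℤ) := by
    rw [hP]
    exact leadingCoeff_of_unique_max p σ huniq
  refine ⟨fun h0 => ?_, ?_⟩
  · rw [h0, Polynomial.leadingCoeff_zero] at hlead
    exact Units.ne_zero _ hlead.symm
  · rw [hlead]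
    rcases Int.units_eq_one_or (Equiv.Perm.sign σ) with h1 | h1 <;> simp [h1]
end
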